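/- arXiv:1303.2590 — 6 statements merged into one kernel-verified Lean document; each statement's English description precedes it below -/
import Mathlib

section
/- Let A be an associative unital algebra over ℂ and let X, P ∈ A satisfy X·P − P·X = c·1 for a scalar c ∈ ℂ. Then for all natural numbers m, n ≥ 1, X^m·P^n − P^n·X^m = Σ_{k=1}^{min(m,n)} c^k · k! · C(m,k) · C(n,k) · P^(n−k)·X^(m−k). In particular the commutator [X^m, P^n] depends only on the canonical commutation relation [X,P] = iħ·1 and is independent of the chosen quantization ordering. -/
/-!
Left and right multiplication by `X` commute, and their difference is `⁅X, ·⁆`. The binomial theorem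
in the endomorphism ring therefore expands `X ^ m * y` in terms of the iterated brackets of `X`
with `y`. For `y = P ^ n` and `⁅X, P⁆ = c` commuting with `X` and `P`, the map `⁅X, ·⁆` acts as
`c d/dP` on polynomials in `P` over `ℤ[c]`, so the `k`-th bracket is
`n (n - 1) ⋯ (n - k + 1) cᵏ P ^ (n - k)`.
-/

open Finset

section Ring

variable {A : Type*} [Ring A] {X P c : A}

theorem pow_mul_eq_sum_iterate_lie (x y : A) (m : ℕ) :
    x ^ m * y = ∑ k ∈ range (m + 1), m.choose k • ((⁅x, ·⁆)^[k] y * x ^ (m - k)) := by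
  let L := LinearMap.mulLeft ℤ x
  let R := LinearMap.mulRight ℤ x
  have comm : Commute R (L - R) :=
    (LinearMap.commute_mulLeft_right x x).symm.sub_right (Commute.refl R)
  have iterate_lie (k : ℕ) : ((L - R) ^ k) y = (⁅x, ·⁆)^[k] y := by
    rw [Module.End.pow_apply]
    rfl
  calc x ^ m * y = ((R + (L - R)) ^ m) y := by
        rw [add_sub_cancel, LinearMap.pow_mulLeft, LinearMap.mulLeft_apply]
    _ = ∑ k ∈ range (m + 1), m.choose k • (R ^ (m - k)) (((L - R) ^ k) y) := by
        rw [add_comm, comm.symm.add_pow]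
        simp [← (comm.pow_pow _ _).eq, ← nsmul_eq_mul', LinearMap.sum_apply]
    _ = _ := by simp [iterate_lie, R, LinearMap.pow_mulRight]

theorem lie_mul (x y z : A) : ⁅x, y * z⁆ = ⁅x, y⁆ * z + y * ⁅x, z⁆ := by
  simp only [Ring.lie_def]
  noncomm_ring

theorem lie_pow_of_commute (h : ⁅X, P⁆ = c) (hcP : Commute c P) (n : ℕ) :
    ⁅X, P ^ n⁆ = n • (c * P ^ (n - 1)) := by
  induction n with
  | zero => simp [Ring.lie_def]
  | succ n ih =>
    have pow_pred_mul : n • (P ^ (n - 1) * P) = n • P ^ n := by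
      cases n with
      | zero => simp
      | succ n => rw [Nat.add_sub_cancel, ← pow_succ]
    calc ⁅X, P ^ (n + 1)⁆ = n • (c * P ^ (n - 1)) * P + P ^ n * c := by
          rw [pow_succ, lie_mul, ih, h]
      _ = n • (c * P ^ n) + c * P ^ n := by
          rw [smul_mul_assoc, mul_assoc, ← mul_smul_comm, pow_pred_mul, mul_smul_comm,
            (hcP.pow_right n).eq]
      _ = (n + 1) • (c * P ^ (n + 1 - 1)) := by rw [Nat.add_sub_cancel, succ_nsmul]

theorem iterate_lie_pow (h : ⁅X, P⁆ = c) (hcX : Commute c X) (hcP : Commute c P) (n k : ℕ) :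
    (⁅X, ·⁆)^[k] (P ^ n) = n.descFactorial k • (c ^ k * P ^ (n - k)) := by
  induction k with
  | zero => simp
  | succ k ih =>
    have lie_mul_left (y : A) : ⁅X, c ^ k * y⁆ = c ^ k * ⁅X, y⁆ := by
      rw [lie_mul, (hcX.pow_left k).symm.lie_eq, zero_mul, zero_add]
    calc (⁅X, ·⁆)^[k + 1] (P ^ n) = ⁅X, n.descFactorial k • (c ^ k * P ^ (n - k))⁆ := by
          rw [Function.iterate_succ_apply', ih]
      _ = n.descFactorial k • (c ^ k * ⁅X, P ^ (n - k)⁆) := by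
          rw [← lie_mul_left, Ring.lie_def, Ring.lie_def, mul_smul_comm, smul_mul_assoc, smul_sub]
      _ = n.descFactorial (k + 1) • (c ^ (k + 1) * P ^ (n - (k + 1))) := by
          rw [lie_pow_of_commute h hcP, mul_smul_comm, smul_smul, ← mul_assoc, ← pow_succ,
            Nat.sub_sub, Nat.descFactorial_succ, mul_comm]

theorem pow_mul_pow_eq_sum_range (h : ⁅X, P⁆ = c) (hcX : Commute c X) (hcP : Commute c P)
    (m n : ℕ) :
    X ^ m * P ^ n = ∑ k ∈ range (min m n + 1),
      (k.factorial * m.choose k * n.choose k) • (c ^ k * (P ^ (n - k) * X ^ (m - k))) := by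
  have coeff_eq (k : ℕ) :
      m.choose k * n.descFactorial k = k.factorial * m.choose k * n.choose k := by
    rw [Nat.descFactorial_eq_factorial_mul_choose]
    ring
  have expansion : X ^ m * P ^ n = ∑ k ∈ range (m + 1),
      (k.factorial * m.choose k * n.choose k) • (c ^ k * (P ^ (n - k) * X ^ (m - k))) := by
    simp only [pow_mul_eq_sum_iterate_lie X (P ^ n), iterate_lie_pow h hcX hcP, smul_mul_assoc,
      smul_smul, coeff_eq, mul_assoc]
  rw [expansion]
  refine (sum_subset (range_subset_range.2 (by omega)) fun k hkm hk => ?_).symm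
  have hnk : n < k := by
    simp only [mem_range] at hkm hk
    omega
  rw [Nat.choose_eq_zero_of_lt hnk, mul_zero, zero_smul]

theorem commutator_pow_pow_general (h : X * P - P * X = c) (hcX : Commute c X)
    (hcP : Commute c P) (m n : ℕ) :
    X ^ m * P ^ n - P ^ n * X ^ m = ∑ k ∈ Icc 1 (min m n),
      (k.factorial * m.choose k * n.choose k) • (c ^ k * (P ^ (n - k) * X ^ (m - k))) := by
  rw [pow_mul_pow_eq_sum_range h hcX hcP, sum_range_eq_add_Ico _ (min m n).add_one_pos,
    Ico_add_one_right_eq_Icc]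
  simp

end Ring

/-- If `X` and `P` satisfy `XP − PX = c·1`, then for all `m, n ≥ 1`,
`[Xᵐ, Pⁿ] = ∑_{k=1}^{min(m,n)} cᵏ k! C(m,k) C(n,k) P^(n−k) X^(m−k)`.
In particular the commutator `[Xᵐ, Pⁿ]` depends only on the commutation
relation and not on the chosen quantization ordering. -/
theorem commutator_pow_pow
    {A : Type*} [Ring A] [Algebra ℂ A] (X P : A) (c : ℂ)
    (h : X * P - P * X = c • (1 : A)) (m n : ℕ) (hm : 1 ≤ m) (hn : 1 ≤ n) :
    X ^ m * P ^ n - P ^ n * X ^ m =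
      ∑ k ∈ Finset.Icc 1 (min m n),
        (c ^ k * (Nat.factorial k : ℂ) * (m.choose k : ℂ) * (n.choose k : ℂ)) •
          (P ^ (n - k) * X ^ (m - k)) := by
  rw [commutator_pow_pow_general h ((Commute.one_left X).smul_left c)
    ((Commute.one_left P).smul_left c)]
  refine sum_congr rfl fun k _ => ?_
  rw [smul_pow, one_pow, smul_one_mul]
  module
end

section
/- For every Schwartz function ψ : ℝⁿ → ℂ and every z ∈ ℝ²ⁿ, the Born–Jordan–Wigner distribution Wig_BJ(ψ,ψ)(z) is real, i.e. conj(Wig_BJ(ψ,ψ)(z)) = Wig_BJ(ψ,ψ)(z). -/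
open MeasureTheory Real Complex

noncomputable section

/-- Euclidean dot product on `ℝⁿ`. -/
def dotR {n : ℕ} (p y : Fin n → ℝ) : ℝ := ∑ i, p i * y i

/-- The `τ`-Wigner cross-distribution
`Wig_τ(ψ,φ)(x,p) = (2πhbar)^(−n) ∫ e^(−(i/hbar) p·y) ψ(x+τy) conj(φ(x−(1−τ)y)) dy`. -/
def WigTau (hbar : ℝ) {n : ℕ} (τ : ℝ) (ψ φ : (Fin n → ℝ) → ℂ) (x p : Fin n → ℝ) : ℂ :=
  ((((2 * π * hbar) ^ n : ℝ))⁻¹ : ℂ) *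
    ∫ y : Fin n → ℝ,
      Complex.exp (-(Complex.I / (hbar : ℂ)) * (dotR p y : ℝ)) *
        ψ (x + τ • y) * (starRingEnd ℂ) (φ (x - (1 - τ) • y))

/-- The Born–Jordan–Wigner cross-distribution: the average of the
`τ`-Wigner distributions over `τ ∈ [0,1]`. -/
def WigBJ (hbar : ℝ) {n : ℕ} (ψ φ : (Fin n → ℝ) → ℂ) (x p : Fin n → ℝ) : ℂ :=
  ∫ τ in (0:ℝ)..1, WigTau hbar τ ψ φ x p

/-- The `hbar`-Fourier transform `Fψ(p) = (2πhbar)^(−n/2) ∫ e^(−(i/hbar) p·x) ψ(x) dx`. -/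
def FourierHbar (hbar : ℝ) {n : ℕ} (ψ : (Fin n → ℝ) → ℂ) (p : Fin n → ℝ) : ℂ :=
  ((Real.sqrt ((2 * π * hbar) ^ n))⁻¹ : ℂ) *
    ∫ x : Fin n → ℝ, Complex.exp (-(Complex.I / (hbar : ℂ)) * (dotR p x : ℝ)) * ψ x

/-- The Shubin `τ`-operator
`A_τψ(x) = (2πhbar)^(−n) ∫∫ e^((i/hbar) p·(x−y)) a(τx+(1−τ)y, p) ψ(y) dp dy`,
the inner integral being over `p`. -/
def ShubinOp (hbar : ℝ) {n : ℕ} (τ : ℝ) (a : ((Fin n → ℝ) × (Fin n → ℝ)) → ℂ)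
    (ψ : (Fin n → ℝ) → ℂ) (x : Fin n → ℝ) : ℂ :=
  ((((2 * π * hbar) ^ n : ℝ))⁻¹ : ℂ) *
    ∫ y : Fin n → ℝ,
      (∫ p : Fin n → ℝ,
          Complex.exp ((Complex.I / (hbar : ℂ)) * (dotR p (x - y) : ℝ)) *
            a (τ • x + (1 - τ) • y, p)) * ψ y

/-- The Born–Jordan operator: the average of the Shubin `τ`-operators
over `τ ∈ [0,1]`. -/
def BJOp (hbar : ℝ) {n : ℕ} (a : ((Fin n → ℝ) × (Fin n → ℝ)) → ℂ)
    (ψ : (Fin n → ℝ) → ℂ) (x : Fin n → ℝ) : ℂ :=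
  ∫ τ in (0:ℝ)..1, ShubinOp hbar τ a ψ x

/-- `Θ(x,p) = sin(p·x/2hbar)/(p·x/2hbar)` (with value `1` when `p·x = 0`). -/
def Theta (hbar : ℝ) {n : ℕ} (x p : Fin n → ℝ) : ℝ :=
  if dotR p x = 0 then 1
  else Real.sin (dotR p x / (2 * hbar)) / (dotR p x / (2 * hbar))

/-- The modified Heisenberg–Weyl operator
`T̂_τ(z₀)ψ(x) = e^((i/hbar)(p₀·x − (1−τ)p₀·x₀)) ψ(x−x₀)`. -/
def THW (hbar : ℝ) {n : ℕ} (τ : ℝ) (z₀ : (Fin n → ℝ) × (Fin n → ℝ))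
    (ψ : (Fin n → ℝ) → ℂ) (x : Fin n → ℝ) : ℂ :=
  Complex.exp ((Complex.I / (hbar : ℂ)) *
      ((dotR z₀.2 x - (1 - τ) * dotR z₀.2 z₀.1 : ℝ) : ℂ)) * ψ (x - z₀.1)

/-- The symplectic Fourier transform
`F_σ a(z) = (2πhbar)^(−n) ∫ e^(−(i/hbar)σ(z,z′)) a(z′) dz′`,
`σ((x,p),(x′,p′)) = p·x′ − p′·x`. -/
def symplFT (hbar : ℝ) {n : ℕ} (a : ((Fin n → ℝ) × (Fin n → ℝ)) → ℂ)
    (z : (Fin n → ℝ) × (Fin n → ℝ)) : ℂ :=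
  ((((2 * π * hbar) ^ n : ℝ))⁻¹ : ℂ) *
    ∫ z' : (Fin n → ℝ) × (Fin n → ℝ),
      Complex.exp (-(Complex.I / (hbar : ℂ)) *
        ((dotR z.2 z'.1 - dotR z'.2 z.1 : ℝ) : ℂ)) * a z'

/-- The cross-ambiguity function
`Amb(ψ,φ)(x,p) = (2πhbar)^(−n) ∫ e^(−(i/hbar) p·x′) ψ(x′+x/2) conj(φ(x′−x/2)) dx′`. -/
def Amb (hbar : ℝ) {n : ℕ} (ψ φ : (Fin n → ℝ) → ℂ) (x p : Fin n → ℝ) : ℂ :=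
  ((((2 * π * hbar) ^ n : ℝ))⁻¹ : ℂ) *
    ∫ x' : Fin n → ℝ,
      Complex.exp (-(Complex.I / (hbar : ℂ)) * (dotR p x' : ℝ)) *
        ψ (x' + (1 / 2 : ℝ) • x) * (starRingEnd ℂ) (φ (x' - (1 / 2 : ℝ) • x))

/-!
Conjugating the integrand of `Wig_τ(ψ,φ)` and substituting `y ↦ -y` restores the phase
`e^(−(i/ħ) p·y)` and turns `x + τy`, `x − (1−τ)y` into `x − τy`, `x + (1−τ)y`: this is the
integrand of `Wig_{1−τ}(φ,ψ)`. The average over `τ ∈ [0,1]` is invariant under `τ ↦ 1 − τ`, so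
`Wig_BJ` is Hermitian in `(ψ,φ)`, hence real on the diagonal.
-/

open scoped ComplexConjugate

theorem dotR_neg {n : ℕ} (p y : Fin n → ℝ) : dotR p (-y) = -dotR p y :=
  dotProduct_neg p y

theorem conj_exp_neg_I_div_mul (hbar t : ℝ) :
    conj (Complex.exp (-(Complex.I / (hbar : ℂ)) * (t : ℂ))) =
      Complex.exp (-(Complex.I / (hbar : ℂ)) * ((-t : ℝ) : ℂ)) := by
  rw [← Complex.exp_conj]
  simp [neg_div]

theorem conj_wigTau (hbar : ℝ) {n : ℕ} (τ : ℝ) (ψ φ : (Fin n → ℝ) → ℂ) (x p : Fin n → ℝ) :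
    conj (WigTau hbar τ ψ φ x p) = WigTau hbar (1 - τ) φ ψ x p := by
  have conj_integrand_neg (y : Fin n → ℝ) :
      conj (Complex.exp (-(Complex.I / (hbar : ℂ)) * (dotR p (-y) : ℝ)) *
          ψ (x + τ • -y) * conj (φ (x - (1 - τ) • -y))) =
        Complex.exp (-(Complex.I / (hbar : ℂ)) * (dotR p y : ℝ)) *
          φ (x + (1 - τ) • y) * conj (ψ (x - (1 - (1 - τ)) • y)) := by
    rw [map_mul, map_mul, conj_conj, conj_exp_neg_I_div_mul, dotR_neg, neg_neg, smul_neg, smul_neg,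
      sub_neg_eq_add, ← sub_eq_add_neg, sub_sub_cancel, mul_right_comm]
  unfold WigTau
  rw [map_mul, ← Complex.ofReal_inv, conj_ofReal, ← integral_conj, ← integral_neg_eq_self]
  simp only [conj_integrand_neg]

theorem conj_wigBJ (hbar : ℝ) {n : ℕ} (ψ φ : (Fin n → ℝ) → ℂ) (x p : Fin n → ℝ) :
    conj (WigBJ hbar ψ φ x p) = WigBJ hbar φ ψ x p :=
  calc conj (∫ τ in (0 : ℝ)..1, WigTau hbar τ ψ φ x p)
      = ∫ τ in (0 : ℝ)..1, conj (WigTau hbar τ ψ φ x p) :=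
        intervalIntegral.intervalIntegral_conj.symm
    _ = ∫ τ in (0 : ℝ)..1, WigTau hbar (1 - τ) φ ψ x p := by simp only [conj_wigTau]
    _ = ∫ τ in (0 : ℝ)..1, WigTau hbar τ φ ψ x p := by
        simpa only [sub_self, sub_zero] using
          intervalIntegral.integral_comp_sub_left (a := 0) (b := 1)
            (fun τ => WigTau hbar τ φ ψ x p) 1

theorem wigBJ_real_general (hbar : ℝ) (_hh : hbar ≠ 0) {n : ℕ} (ψ : (Fin n → ℝ) → ℂ)
    (x p : Fin n → ℝ) : conj (WigBJ hbar ψ ψ x p) = WigBJ hbar ψ ψ x p :=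
  conj_wigBJ hbar ψ ψ x p

/-- The Born–Jordan–Wigner distribution of a function is real:
`conj (Wig_BJ(ψ,ψ)(z)) = Wig_BJ(ψ,ψ)(z)`. -/
theorem wigBJ_real (hbar : ℝ) (hh : 0 < hbar) (n : ℕ) (hn : 1 ≤ n)
    (ψ : SchwartzMap (Fin n → ℝ) ℂ) (x p : Fin n → ℝ) :
    (starRingEnd ℂ) (WigBJ hbar (⇑ψ) (⇑ψ) x p) = WigBJ hbar (⇑ψ) (⇑ψ) x p :=
  wigBJ_real_general hbar hh.ne' ψ x p

end
end

section
/- For every real τ, every Schwartz symbol a : ℝ²ⁿ → ℂ and all Schwartz functions ψ, φ : ℝⁿ → ℂ, ∫_{ℝⁿ} (A_τψ)(x)·conj(φ(x)) dx = ∫_{ℝ²ⁿ} a(z)·Wig_τ(ψ,φ)(z) dz. -/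
open MeasureTheory Real Complex

noncomputable section

/-! Up to the unimodular substitution `x = u − (1−τ)v`, `y = u + τv`, both sides are iterated
integrals of the same function `e^((i/hbar) p·(x−y)) a(τx+(1−τ)y, p) ψ(y) conj(φ(x))`: the mean
`τx + (1−τ)y` becomes `u` and the difference `x − y` becomes `−v`. The interchange of integrals is
justified by absolute integrability: a Schwartz symbol is dominated by an integrable function of
the momentum alone, so the integrand is dominated by a product of integrable functions of `x`, `y`
and `p`. -/

section TauCoordinates

variable {E F R : Type*} [CommRing R] [AddCommGroup E] [Module R E]
  [MeasurableSpace E] [MeasurableAdd₂ E] [MeasurableSub₂ E] [MeasurableConstSMul R E]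
  [MeasurableSpace F]

/-- The change of variables `((u, p), v) ↦ ((x, y), p)` behind the `τ`-Wigner distribution: `u` is
the `τ`-weighted mean of `x` and `y`, and `v = y - x`. The momentum `p` is a spectator; it sits in
the middle on the left so that `(u, p)` is a point of phase space. -/
def tauCoords (τ : R) : (E × F) × E ≃ᵐ (E × E) × F where
  toFun w := ((w.1.1 - (1 - τ) • w.2, w.1.1 + τ • w.2), w.1.2)
  invFun w := ((τ • w.1.1 + (1 - τ) • w.1.2, w.2), w.1.2 - w.1.1)
  left_inv w := by
    ext <;> dsimp only <;> module
  right_inv w := by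
    ext <;> dsimp only <;> module
  measurable_toFun := by
    simp only [Equiv.coe_fn_mk]
    fun_prop
  measurable_invFun := by
    simp only [Equiv.coe_fn_symm_mk]
    fun_prop

lemma tauCoords_apply (τ : R) (u v : E) (p : F) :
    tauCoords τ ((u, p), v) = ((u - (1 - τ) • v, u + τ • v), p) := rfl

lemma measurePreserving_sub_smul_add_smul (μ : Measure E) [SFinite μ] [μ.IsAddLeftInvariant]
    (τ : R) :
    MeasurePreserving (fun w : E × E ↦ (w.1 - (1 - τ) • w.2, w.1 + τ • w.2))
      (μ.prod μ) (μ.prod μ) := by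
  have shear : MeasurePreserving (fun w : E × E ↦ (w.1, w.2 - (1 - τ) • w.1))
      (μ.prod μ) (μ.prod μ) :=
    (MeasurePreserving.id μ).skew_product (g := fun v u ↦ u - (1 - τ) • v)
      (by unfold Function.uncurry; fun_prop)
      (.of_forall fun v ↦ (measurePreserving_sub_right μ ((1 - τ) • v)).map_eq)
  convert (measurePreserving_prod_add_swap μ μ).comp (shear.comp Measure.measurePreserving_swap)
    using 1
  ext w <;> simp only [Function.comp_apply, Prod.swap]
  module

lemma measurePreserving_tauCoords (μ : Measure E) [SFinite μ] [μ.IsAddLeftInvariant]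
    (ν : Measure F) [SFinite ν] (τ : R) :
    MeasurePreserving (tauCoords τ) ((μ.prod ν).prod μ) ((μ.prod μ).prod ν) :=
  ((measurePreserving_sub_smul_add_smul μ τ).prod (.id ν)).comp <|
    ((measurePreserving_prodAssoc μ μ ν).symm _).comp <|
      ((MeasurePreserving.id μ).prod Measure.measurePreserving_swap).comp
        (measurePreserving_prodAssoc μ ν μ)

lemma integral_integral_integral_eq_tauCoords {μ : Measure E} [SFinite μ] [μ.IsAddLeftInvariant]
    {ν : Measure F} [SFinite ν] {G : Type*} [NormedAddCommGroup G] [NormedSpace ℝ G] (τ : R)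
    {f : (E × E) × F → G} (hf : Integrable f ((μ.prod μ).prod ν)) :
    ∫ x, ∫ y, ∫ p, f ((x, y), p) ∂ν ∂μ ∂μ = ∫ z, ∫ v, f (tauCoords τ (z, v)) ∂μ ∂μ.prod ν := by
  have hT := measurePreserving_tauCoords μ ν τ
  calc ∫ x, ∫ y, ∫ p, f ((x, y), p) ∂ν ∂μ ∂μ
      = ∫ q, ∫ p, f (q, p) ∂ν ∂μ.prod μ := (integral_prod _ hf.integral_prod_left).symm
    _ = ∫ w, f w ∂(μ.prod μ).prod ν := (integral_prod _ hf).symm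
    _ = ∫ w, f (tauCoords τ w) ∂(μ.prod ν).prod μ := (hT.integral_comp' f).symm
    _ = ∫ z, ∫ v, f (tauCoords τ (z, v)) ∂μ ∂μ.prod ν :=
        integral_prod _ (hT.integrable_comp_of_integrable hf)

end TauCoordinates

lemma exists_integrable_norm_schwartzMap_le_snd {E F V : Type*}
    [NormedAddCommGroup E] [NormedSpace ℝ E] [NormedAddCommGroup F] [NormedSpace ℝ F]
    [NormedAddCommGroup V] [NormedSpace ℝ V] [MeasurableSpace F] (μ : Measure F)
    [μ.HasTemperateGrowth] (a : SchwartzMap (E × F) V) :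
    ∃ g : F → ℝ, Integrable g μ ∧ ∀ z, ‖a z‖ ≤ g z.2 := by
  set k := μ.integrablePower
  obtain ⟨C, hC⟩ : ∃ C : ℝ, ∀ z, (1 + ‖z‖) ^ k * ‖a z‖ ≤ C :=
    ⟨_, fun z ↦ by
      simpa only [norm_iteratedFDeriv_zero] using
        a.one_add_le_sup_seminorm_apply (𝕜 := ℝ) (m := (k, 0)) le_rfl le_rfl z⟩
  refine ⟨fun p ↦ C * (1 + ‖p‖) ^ (-(k : ℝ)),
    (Measure.integrable_pow_neg_integrablePower μ).const_mul C, fun z ↦ ?_⟩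
  dsimp only
  rw [Real.rpow_neg (by positivity), Real.rpow_natCast, ← div_eq_mul_inv,
    le_div_iff₀' (by positivity)]
  calc (1 + ‖z.2‖) ^ k * ‖a z‖ ≤ (1 + ‖z‖) ^ k * ‖a z‖ := by
        gcongr
        exact norm_snd_le z
    _ ≤ C := hC z

section PhaseSpace

variable {n : ℕ}

lemma norm_exp_I_div_mul_ofReal (h r : ℝ) : ‖cexp (I / (h : ℂ) * (r : ℂ))‖ = 1 := by
  rw [div_mul_eq_mul_div, mul_comm I, ← div_mul_eq_mul_div, ← ofReal_div, norm_exp_ofReal_mul_I]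

lemma dotR_neg_right (p y : Fin n → ℝ) : dotR p (-y) = -dotR p y := dotProduct_neg p y

/-- The integrand of `⟨A_τψ, φ⟩` in the variables `((x, y), p)`, without the factor
`(2πhbar)^(−n)`. -/
def shubinIntegrand (hbar τ : ℝ) (a : (Fin n → ℝ) × (Fin n → ℝ) → ℂ) (ψ φ : (Fin n → ℝ) → ℂ)
    (w : ((Fin n → ℝ) × (Fin n → ℝ)) × (Fin n → ℝ)) : ℂ :=
  cexp (I / (hbar : ℂ) * (dotR w.2 (w.1.1 - w.1.2) : ℝ)) *
    a (τ • w.1.1 + (1 - τ) • w.1.2, w.2) * (ψ w.1.2 * (starRingEnd ℂ) (φ w.1.1))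

variable (hbar τ : ℝ) (a : (Fin n → ℝ) × (Fin n → ℝ) → ℂ) (ψ φ : (Fin n → ℝ) → ℂ)

lemma shubinIntegrand_tauCoords (w : ((Fin n → ℝ) × (Fin n → ℝ)) × (Fin n → ℝ)) :
    shubinIntegrand hbar τ a ψ φ (tauCoords τ w) =
      a w.1 * (cexp (-(I / (hbar : ℂ)) * (dotR w.1.2 w.2 : ℝ)) * ψ (w.1.1 + τ • w.2) *
        (starRingEnd ℂ) (φ (w.1.1 - (1 - τ) • w.2))) := by
  obtain ⟨⟨u, p⟩, v⟩ := w
  have diff_eq : u - (1 - τ) • v - (u + τ • v) = -v := by module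
  have mean_eq : τ • (u - (1 - τ) • v) + (1 - τ) • (u + τ • v) = u := by module
  simp only [tauCoords_apply, shubinIntegrand, diff_eq, mean_eq, dotR_neg_right, ofReal_neg,
    mul_neg, neg_mul]
  ring

lemma shubinOp_mul_conj (x : Fin n → ℝ) :
    ShubinOp hbar τ a ψ x * (starRingEnd ℂ) (φ x) =
      (((2 * π * hbar) ^ n : ℝ) : ℂ)⁻¹ *
        ∫ y, ∫ p, shubinIntegrand hbar τ a ψ φ ((x, y), p) := by
  simp only [ShubinOp, shubinIntegrand, integral_mul_const, ← mul_assoc]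

lemma mul_wigTau (z : (Fin n → ℝ) × (Fin n → ℝ)) :
    a z * WigTau hbar τ ψ φ z.1 z.2 =
      (((2 * π * hbar) ^ n : ℝ) : ℂ)⁻¹ *
        ∫ v, shubinIntegrand hbar τ a ψ φ (tauCoords τ (z, v)) := by
  simp only [WigTau, shubinIntegrand_tauCoords, integral_const_mul, mul_left_comm]

variable {a ψ φ}

lemma integrable_shubinIntegrand {g : (Fin n → ℝ) → ℝ}
    (ha : AEStronglyMeasurable a) (hg : Integrable g) (hag : ∀ᵐ z, ‖a z‖ ≤ g z.2)
    (hψ : Integrable ψ) (hφ : Integrable φ) :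
    Integrable (shubinIntegrand hbar τ a ψ φ) := by
  have hT : MeasurePreserving (tauCoords (E := Fin n → ℝ) (F := Fin n → ℝ) τ) :=
    measurePreserving_tauCoords volume volume τ
  have mean_momentum : Measure.QuasiMeasurePreserving
      (fun w : ((Fin n → ℝ) × (Fin n → ℝ)) × (Fin n → ℝ) ↦
        (τ • w.1.1 + (1 - τ) • w.1.2, w.2)) :=
    Measure.quasiMeasurePreserving_fst.comp (hT.symm _).quasiMeasurePreserving
  have hψφ : Integrable fun w : (Fin n → ℝ) × (Fin n → ℝ) ↦
      ψ w.2 * (starRingEnd ℂ) (φ w.1) :=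
    (hψ.mul_prod (conjCLE.toContinuousLinearMap.integrable_comp hφ)).swap
  refine (hψφ.norm.mul_prod hg).mono' ?_ ?_
  · have phase : Continuous fun w : ((Fin n → ℝ) × (Fin n → ℝ)) × (Fin n → ℝ) ↦
        cexp (I / (hbar : ℂ) * (dotR w.2 (w.1.1 - w.1.2) : ℝ)) := by
      unfold dotR; fun_prop
    exact (phase.aestronglyMeasurable.mul (ha.comp_quasiMeasurePreserving mean_momentum)).mul
      hψφ.aestronglyMeasurable.comp_fst
  · filter_upwards [mean_momentum.ae hag] with w hw
    rw [shubinIntegrand, norm_mul, norm_mul, norm_exp_I_div_mul_ofReal, one_mul, mul_comm]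
    gcongr

theorem shubinOp_wigTau_general (_hh : hbar ≠ 0) {g : (Fin n → ℝ) → ℝ}
    (ha : AEStronglyMeasurable a) (hg : Integrable g) (hag : ∀ᵐ z, ‖a z‖ ≤ g z.2)
    (hψ : Integrable ψ) (hφ : Integrable φ) :
    ∫ x : Fin n → ℝ, ShubinOp hbar τ a ψ x * (starRingEnd ℂ) (φ x) =
      ∫ z : (Fin n → ℝ) × (Fin n → ℝ), a z * WigTau hbar τ ψ φ z.1 z.2 := by
  simp only [shubinOp_mul_conj, mul_wigTau, integral_const_mul]
  congr 1
  exact integral_integral_integral_eq_tauCoords τ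
    (integrable_shubinIntegrand hbar τ ha hg hag hψ hφ)

end PhaseSpace

/-- The fundamental relation between Shubin `τ`-operators and the `τ`-Wigner
distribution: `⟨A_τψ, conj φ⟩ = ⟨a, Wig_τ(ψ,φ)⟩`. -/
theorem shubinOp_wigTau (hbar : ℝ) (hh : 0 < hbar) (n : ℕ) (hn : 1 ≤ n) (τ : ℝ)
    (a : SchwartzMap ((Fin n → ℝ) × (Fin n → ℝ)) ℂ)
    (ψ φ : SchwartzMap (Fin n → ℝ) ℂ) :
    ∫ x : Fin n → ℝ, ShubinOp hbar τ (⇑a) (⇑ψ) x * (starRingEnd ℂ) (φ x) =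
      ∫ z : (Fin n → ℝ) × (Fin n → ℝ), a z * WigTau hbar τ (⇑ψ) (⇑φ) z.1 z.2 := by
  obtain ⟨g, hg, hag⟩ := exists_integrable_norm_schwartzMap_le_snd (volume : Measure (Fin n → ℝ)) a
  exact shubinOp_wigTau_general hbar τ hh.ne' a.continuous.aestronglyMeasurable hg
    (.of_forall hag) ψ.integrable φ.integrable

end
end

section
/- For every z₀ = (x₀,p₀) ∈ ℝ²ⁿ, every function ψ : ℝⁿ → ℂ and every x ∈ ℝⁿ, ∫₀¹ (T̂_τ(z₀)ψ)(x) dτ = Θ(x₀,p₀) · (T̂(z₀)ψ)(x); that is, the average of the modified Heisenberg–Weyl operators T̂_τ(z₀) over τ ∈ [0,1] equals Θ(z₀)·T̂(z₀). -/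
open MeasureTheory Real Complex

noncomputable section

/-!
The phase of `T̂_τ(z₀)` is affine in `τ` with slope `p₀·x₀/ℏ`. Averaging an affine phase over an
interval gives its value at the midpoint, here `τ = 1/2`, times `sinc` of half its variation, here
`p₀·x₀/(2ℏ)`.
-/

lemma integral_exp_affine_mul_I (a b c d : ℝ) :
    ∫ t in a..b, Complex.exp ((c * t + d : ℝ) * I) =
      (b - a) * sinc (c * (b - a) / 2) * Complex.exp ((c * ((a + b) / 2) + d : ℝ) * I) := by
  rcases eq_or_ne c 0 with rfl | hc
  · simp
  set m : ℝ := (a + b) / 2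
  have factor_midpoint (t : ℝ) : Complex.exp ((c * t + d : ℝ) * I) =
      Complex.exp ((c * t - c * m : ℝ) * I) * Complex.exp ((c * m + d : ℝ) * I) := by
    rw [← Complex.exp_add]
    push_cast
    ring_nf
  have integral_centered : ∫ t in a..b, Complex.exp ((c * t - c * m : ℝ) * I) =
      (b - a) * sinc (c * (b - a) / 2) := by
    have hc' : (c : ℂ) ≠ 0 := ofReal_ne_zero.mpr hc
    apply mul_left_cancel₀ hc'
    calc c * ∫ t in a..b, Complex.exp ((c * t - c * m : ℝ) * I)
        = ∫ s in (c * a - c * m)..(c * b - c * m), Complex.exp (s * I) :=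
          intervalIntegral.smul_integral_comp_mul_sub (fun s : ℝ ↦ Complex.exp (s * I)) c (c * m)
      _ = ∫ s in -(c * (b - a) / 2)..(c * (b - a) / 2), Complex.exp (s * I) := by
          congr 1 <;> simp only [m] <;> ring
      _ = c * ((b - a) * sinc (c * (b - a) / 2)) := by
          rw [integral_exp_mul_I_eq_sinc]
          push_cast
          ring
  rw [intervalIntegral.integral_congr fun t _ ↦ factor_midpoint t,
    intervalIntegral.integral_mul_const, integral_centered]

lemma Theta_eq_sinc {hbar : ℝ} (hh : hbar ≠ 0) {n : ℕ} (x p : Fin n → ℝ) :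
    Theta hbar x p = sinc (dotR p x / (2 * hbar)) := by
  simp [Theta, sinc_apply, hh]

lemma THW_eq_exp_affine_mul (hbar τ : ℝ) {n : ℕ} (z₀ : (Fin n → ℝ) × (Fin n → ℝ))
    (ψ : (Fin n → ℝ) → ℂ) (x : Fin n → ℝ) :
    THW hbar τ z₀ ψ x =
      Complex.exp ((dotR z₀.2 z₀.1 / hbar * τ + (dotR z₀.2 x - dotR z₀.2 z₀.1) / hbar : ℝ) * I) *
        ψ (x - z₀.1) := by
  unfold THW
  push_cast
  ring_nf

/-- Averaging the modified Heisenberg–Weyl operators over `τ ∈ [0,1]` yields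
`Θ(z₀)·T̂(z₀)` where `T̂(z₀) = T̂_{1/2}(z₀)`. -/
theorem average_THW_eq_theta (hbar : ℝ) (hh : 0 < hbar) (n : ℕ) (hn : 1 ≤ n)
    (z₀ : (Fin n → ℝ) × (Fin n → ℝ)) (ψ : (Fin n → ℝ) → ℂ) (x : Fin n → ℝ) :
    ∫ τ in (0:ℝ)..1, THW hbar τ z₀ ψ x =
      ((Theta hbar z₀.1 z₀.2 : ℝ) : ℂ) * THW hbar (1 / 2) z₀ ψ x := by
  have half_variation : dotR z₀.2 z₀.1 / hbar * (1 - 0) / 2 = dotR z₀.2 z₀.1 / (2 * hbar) := by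
    ring
  simp_rw [THW_eq_exp_affine_mul, intervalIntegral.integral_mul_const]
  rw [integral_exp_affine_mul_I, half_variation, ← Theta_eq_sinc hh.ne', ← mul_assoc]
  simp only [zero_add, ofReal_one, ofReal_zero, sub_zero, one_mul]

end
end

section
/- For all Schwartz functions ψ, φ : ℝⁿ → ℂ and every z = (x,p) ∈ ℝ²ⁿ, the symplectic Fourier transform of the Born–Jordan–Wigner distribution equals Θ times the cross-ambiguity function: F_σ(Wig_BJ(ψ,φ))(z) = Θ(x,p) · Amb(ψ,φ)(z). -/
open MeasureTheory Real Complex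

noncomputable section

/-!
For each `x`, the function `p ↦ Wig_τ(ψ,φ)(x,p)` is a multiple of the `ħ`-Fourier transform of the
Schwartz function `y ↦ ψ(x + τy) conj(φ(x − (1 − τ)y))`. Fourier inversion in the momentum variable
followed by a translation by `(τ − 1/2)x` in the position variable therefore gives
`F_σ(Wig_τ(ψ,φ))(x,p) = e^((i/ħ)(τ − 1/2) p·x) Amb(ψ,φ)(x,p)` for every real `τ`, and averaging the
phase over `τ ∈ [0,1]` produces `sinc(p·x/(2ħ)) = Θ(x,p)`.

Exchanging the average with `F_σ` needs an integrable majorant of `Wig_τ(ψ,φ)` that is uniform in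
`τ`. The slices above, weighted by `(1 + ‖x‖)^k` with `x` arbitrary and `τ` in a compact interval,
form a bounded subset of Schwartz space, and the Fourier transform, being continuous on that space,
maps it to a bounded set; so `Wig_τ(ψ,φ)(x,p)` decays rapidly in `x` and `p` jointly.
-/

section Schwartz

open SchwartzMap

variable {E : Type*} [NormedAddCommGroup E] [NormedSpace ℝ E]
variable {F : Type*} [NormedAddCommGroup F] [NormedSpace ℝ F]

lemma exists_one_add_norm_pow_mul_norm_iteratedFDeriv_comp_add_smul_le (f : 𝓢(E, F)) (k m : ℕ) :
    ∃ C, 0 ≤ C ∧ ∀ (c : ℝ) (x y : E),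
      (1 + ‖x + c • y‖) ^ k * ‖iteratedFDeriv ℝ m (fun y => f (x + c • y)) y‖ ≤ C * |c| ^ m := by
  have hf := f.one_add_le_sup_seminorm_apply (𝕜 := ℝ) (m := (k, m)) le_rfl le_rfl
  refine ⟨_, le_trans (by positivity) (hf 0), fun c x y => ?_⟩
  have hderiv : ‖iteratedFDeriv ℝ m (fun y => f (x + c • y)) y‖ =
      |c| ^ m * ‖iteratedFDeriv ℝ m f (x + c • y)‖ := by
    have hshift : ContDiff ℝ m (fun z => f (x + z)) := (f.smooth m).comp (by fun_prop)
    have hcomp := congrFun (iteratedFDeriv_comp_const_smul c hshift) y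
    rw [hcomp, iteratedFDeriv_comp_add_left, norm_smul, norm_pow, Real.norm_eq_abs]
  rw [hderiv, mul_left_comm, mul_comm]
  exact mul_le_mul_of_nonneg_right (hf (x + c • y)) (by positivity)

lemma one_add_norm_mul_one_add_norm_le (τ : ℝ) (x y : E) :
    (1 + ‖x‖) * (1 + ‖y‖) ≤
      (1 + |τ|) * ((1 + ‖x + τ • y‖) * (1 + ‖x - (1 - τ) • y‖)) ^ 2 := by
  set u := x + τ • y with hu
  set v := x - (1 - τ) • y with hv
  have hy : ‖y‖ ≤ ‖u‖ + ‖v‖ := by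
    rw [show y = u - v by rw [hu, hv]; module]
    exact norm_sub_le u v
  have hx : ‖x‖ ≤ ‖u‖ + |τ| * (‖u‖ + ‖v‖) := calc
    ‖x‖ = ‖u - τ • y‖ := by rw [hu, add_sub_cancel_right]
    _ ≤ ‖u‖ + |τ| * ‖y‖ := by simpa only [norm_smul, Real.norm_eq_abs] using norm_sub_le u (τ • y)
    _ ≤ ‖u‖ + |τ| * (‖u‖ + ‖v‖) := by gcongr
  have huv : 1 + ‖u‖ + ‖v‖ ≤ (1 + ‖u‖) * (1 + ‖v‖) := by
    nlinarith [norm_nonneg u, norm_nonneg v]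
  have hy' : 1 + ‖y‖ ≤ (1 + ‖u‖) * (1 + ‖v‖) := by linarith
  have hx' : 1 + ‖x‖ ≤ (1 + |τ|) * ((1 + ‖u‖) * (1 + ‖v‖)) := by
    nlinarith [abs_nonneg τ, norm_nonneg v]
  calc (1 + ‖x‖) * (1 + ‖y‖)
      ≤ (1 + |τ|) * ((1 + ‖u‖) * (1 + ‖v‖)) * ((1 + ‖u‖) * (1 + ‖v‖)) := by gcongr
    _ = (1 + |τ|) * ((1 + ‖u‖) * (1 + ‖v‖)) ^ 2 := by ring

lemma exists_one_add_norm_pow_mul_norm_iteratedFDeriv_comp_mul_comp_le {A : Type*} [NormedRing A]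
    [NormedAlgebra ℝ A] (f g : 𝓢(E, A)) (k m : ℕ) :
    ∃ C, ∀ (τ : ℝ) (x y : E),
      ((1 + ‖x‖) * (1 + ‖y‖)) ^ k *
          ‖iteratedFDeriv ℝ m (fun y => f (x + τ • y) * g (x - (1 - τ) • y)) y‖ ≤
        C * (1 + |τ|) ^ (k + m) := by
  choose Cf hCf_nonneg hCf using
    exists_one_add_norm_pow_mul_norm_iteratedFDeriv_comp_add_smul_le f (2 * k)
  choose Cg hCg_nonneg hCg using
    exists_one_add_norm_pow_mul_norm_iteratedFDeriv_comp_add_smul_le g (2 * k)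
  refine ⟨∑ i ∈ Finset.range (m + 1), (m.choose i : ℝ) * Cf i * Cg (m - i), fun τ x y => ?_⟩
  set u := x + τ • y
  set v := x - (1 - τ) • y
  set a := fun i => ‖iteratedFDeriv ℝ i (fun y => f (x + τ • y)) y‖
  set b := fun i => ‖iteratedFDeriv ℝ i (fun y => g (x - (1 - τ) • y)) y‖
  have ha (i : ℕ) : (1 + ‖u‖) ^ (2 * k) * a i ≤ Cf i * (1 + |τ|) ^ i := by
    grw [hCf i τ x y, ← le_add_of_nonneg_left zero_le_one]
    exact hCf_nonneg i
  have hb (i : ℕ) : (1 + ‖v‖) ^ (2 * k) * b i ≤ Cg i * (1 + |τ|) ^ i := by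
    have h := hCg i (-(1 - τ)) x y
    simp only [neg_smul, ← sub_eq_add_neg, abs_neg] at h
    grw [h, abs_sub, abs_one]
    exact hCg_nonneg i
  have hleibniz : ‖iteratedFDeriv ℝ m (fun y => f (x + τ • y) * g (x - (1 - τ) • y)) y‖ ≤
      ∑ i ∈ Finset.range (m + 1), m.choose i * a i * b (m - i) :=
    norm_iteratedFDeriv_mul_le (N := m) ((f.smooth m).comp (by fun_prop))
      ((g.smooth m).comp (by fun_prop)) y le_rfl
  calc ((1 + ‖x‖) * (1 + ‖y‖)) ^ k * _
      ≤ ((1 + |τ|) * ((1 + ‖u‖) * (1 + ‖v‖)) ^ 2) ^ k *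
          ∑ i ∈ Finset.range (m + 1), m.choose i * a i * b (m - i) := by
        grw [one_add_norm_mul_one_add_norm_le τ x y, hleibniz]
    _ = (1 + |τ|) ^ k * ∑ i ∈ Finset.range (m + 1), m.choose i *
          ((1 + ‖u‖) ^ (2 * k) * a i) * ((1 + ‖v‖) ^ (2 * k) * b (m - i)) := by
        simp only [mul_pow, ← pow_mul, Finset.mul_sum]
        exact Finset.sum_congr rfl fun i _ => by ring
    _ ≤ (1 + |τ|) ^ k * ∑ i ∈ Finset.range (m + 1), m.choose i *
          (Cf i * (1 + |τ|) ^ i) * (Cg (m - i) * (1 + |τ|) ^ (m - i)) := by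
        refine mul_le_mul_of_nonneg_left (Finset.sum_le_sum fun i _ => ?_) (by positivity)
        have := hCf_nonneg i
        grw [ha i, hb (m - i)]
    _ = (∑ i ∈ Finset.range (m + 1), m.choose i * Cf i * Cg (m - i)) * (1 + |τ|) ^ (k + m) := by
        rw [Finset.mul_sum, Finset.sum_mul]
        refine Finset.sum_congr rfl fun i hi => ?_
        rw [← Nat.add_sub_of_le (Finset.mem_range_succ_iff.mp hi), Nat.add_sub_cancel_left]
        ring

/-- The function `y ↦ ψ(x + τy) conj(φ(x − (1 − τ)y))`, whose Fourier transform in `y` is, up to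
normalization, the `τ`-Wigner cross-distribution of `ψ` and `φ` at position `x`. -/
def wignerSlice (ψ φ : 𝓢(E, ℂ)) (τ : ℝ) (x : E) : 𝓢(E, ℂ) where
  toFun y := ψ (x + τ • y) * (starRingEnd ℂ) (φ (x - (1 - τ) • y))
  smooth' := by
    have hψ := ψ.smooth ⊤
    have hφ := (φ.postcompCLM (Complex.conjCLE : ℂ →L[ℝ] ℂ)).smooth ⊤
    exact (hψ.comp (by fun_prop)).mul (hφ.comp (g := _) (by fun_prop))
  decay' k m := by
    obtain ⟨C, hC⟩ := exists_one_add_norm_pow_mul_norm_iteratedFDeriv_comp_mul_comp_le ψ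
      (φ.postcompCLM (Complex.conjCLE : ℂ →L[ℝ] ℂ)) k m
    refine ⟨C * (1 + |τ|) ^ (k + m), fun y => le_trans ?_ (hC τ x y)⟩
    gcongr
    · nlinarith [norm_nonneg x, norm_nonneg y]
    · rfl

lemma wignerSlice_apply (ψ φ : 𝓢(E, ℂ)) (τ : ℝ) (x y : E) :
    wignerSlice ψ φ τ x y = ψ (x + τ • y) * (starRingEnd ℂ) (φ (x - (1 - τ) • y)) :=
  rfl

lemma isVonNBounded_one_add_norm_pow_smul_wignerSlice (ψ φ : 𝓢(E, ℂ)) (k : ℕ) (R : ℝ) :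
    Bornology.IsVonNBounded ℝ
      ((fun q : ℝ × E => (1 + ‖q.2‖) ^ k • wignerSlice ψ φ q.1 q.2) '' {q | |q.1| ≤ R}) := by
  rw [(schwartz_withSeminorms ℝ E ℂ).image_isVonNBounded_iff_seminorm_bounded]
  rintro ⟨l, m⟩
  obtain ⟨C, hC⟩ := exists_one_add_norm_pow_mul_norm_iteratedFDeriv_comp_mul_comp_le ψ
    (φ.postcompCLM (Complex.conjCLE : ℂ →L[ℝ] ℂ)) (k + l) m
  refine ⟨max 0 (|C| * (1 + R) ^ (k + l + m)) + 1, by positivity, fun ⟨τ, x⟩ hτ => ?_⟩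
  refine lt_add_of_le_of_pos ?_ one_pos
  refine seminorm_le_bound ℝ l m _ (le_max_left ..) fun y => le_max_of_le_right ?_
  have hsmul : ‖iteratedFDeriv ℝ m (⇑((1 + ‖x‖) ^ k • wignerSlice ψ φ τ x)) y‖ =
      (1 + ‖x‖) ^ k * ‖iteratedFDeriv ℝ m (wignerSlice ψ φ τ x) y‖ := by
    rw [FunLike.coe_smul, iteratedFDeriv_const_smul_apply ((wignerSlice ψ φ τ x).contDiffAt m),
      norm_smul, Real.norm_of_nonneg (by positivity)]
  calc ‖y‖ ^ l * ‖iteratedFDeriv ℝ m (⇑((1 + ‖x‖) ^ k • wignerSlice ψ φ τ x)) y‖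
      = (1 + ‖x‖) ^ k * ‖y‖ ^ l * ‖iteratedFDeriv ℝ m (wignerSlice ψ φ τ x) y‖ := by
        rw [hsmul]; ring
    _ ≤ ((1 + ‖x‖) * (1 + ‖y‖)) ^ (k + l) * ‖iteratedFDeriv ℝ m (wignerSlice ψ φ τ x) y‖ := by
        rw [pow_add]
        gcongr <;> nlinarith [norm_nonneg x, norm_nonneg y]
    _ ≤ C * (1 + |τ|) ^ (k + l + m) := hC τ x y
    _ ≤ |C| * (1 + R) ^ (k + l + m) := by
        gcongr
        exacts [le_abs_self C, hτ]

lemma exists_one_add_norm_pow_mul_norm_le_of_isVonNBounded {S : Set 𝓢(E, F)}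
    (hS : Bornology.IsVonNBounded ℝ S) (k : ℕ) :
    ∃ C, ∀ f ∈ S, ∀ x, (1 + ‖x‖) ^ k * ‖f x‖ ≤ C := by
  obtain ⟨r, -, hr⟩ :=
    (schwartz_withSeminorms ℝ E F).isVonNBounded_iff_finset_seminorm_bounded.mp hS
      (Finset.Iic (k, 0))
  refine ⟨2 ^ k * r, fun f hf x => ?_⟩
  calc (1 + ‖x‖) ^ k * ‖f x‖
      ≤ 2 ^ k * (Finset.Iic (k, 0)).sup (schwartzSeminormFamily ℝ E F) f := by
        rw [← norm_iteratedFDeriv_zero (𝕜 := ℝ) (f := f)]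
        exact f.one_add_le_sup_seminorm_apply (𝕜 := ℝ) (m := (k, 0)) le_rfl le_rfl x
    _ ≤ 2 ^ k * r := by gcongr; exact (hr f hf).le

end Schwartz

section PhaseSpace

open FourierTransform SchwartzMap

variable {n : ℕ}

lemma inner_eq_dotR (v w : EuclideanSpace ℝ (Fin n)) : inner ℝ v w = dotR w.ofLp v.ofLp := by
  simp [dotR, PiLp.inner_apply]

lemma dotR_comm (x y : Fin n → ℝ) : dotR x y = dotR y x :=
  dotProduct_comm x y

lemma dotR_smul (c : ℝ) (x y : Fin n → ℝ) : dotR x (c • y) = c * dotR x y :=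
  dotProduct_smul c x y

lemma dotR_add (x y z : Fin n → ℝ) : dotR x (y + z) = dotR x y + dotR x z :=
  dotProduct_add x y z

@[fun_prop]
lemma continuous_dotR {X : Type*} [TopologicalSpace X] {a b : X → Fin n → ℝ} (ha : Continuous a)
    (hb : Continuous b) : Continuous (fun t => dotR (a t) (b t)) :=
  ha.dotProduct hb

lemma norm_exp_neg_I_div_mul (hbar t : ℝ) :
    ‖Complex.exp (-(Complex.I / (hbar : ℂ)) * (t : ℂ))‖ = 1 := by
  rw [show -(Complex.I / (hbar : ℂ)) * t = ((-(t / hbar) : ℝ) : ℂ) * Complex.I by push_cast; ring]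
  exact Complex.norm_exp_ofReal_mul_I _

lemma integral_euclideanSpace_ofLp {G : Type*} [NormedAddCommGroup G] [NormedSpace ℝ G]
    (h : (Fin n → ℝ) → G) :
    ∫ w : EuclideanSpace ℝ (Fin n), h w.ofLp = ∫ x, h x :=
  (PiLp.volume_preserving_ofLp (Fin n)).integral_comp
    (MeasurableEquiv.toLp 2 (Fin n → ℝ)).symm.measurableEmbedding h

lemma fourierHbar_eq_fourier (hbar : ℝ) (f : (Fin n → ℝ) → ℂ) (p : Fin n → ℝ) :
    FourierHbar hbar f p = ((Real.sqrt ((2 * π * hbar) ^ n))⁻¹ : ℂ) *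
      𝓕 (fun v : EuclideanSpace ℝ (Fin n) => f v.ofLp) ((2 * π * hbar)⁻¹ • WithLp.toLp 2 p) := by
  rw [FourierHbar, Real.fourier_eq', ← integral_euclideanSpace_ofLp]
  congr! 4 with v
  rw [inner_smul_right, inner_eq_dotR, mul_inv]
  push_cast
  field_simp

/-- The `ħ`-Fourier transform `FourierHbar` as a continuous linear operator on Schwartz space,
obtained from Mathlib's Fourier transform on `EuclideanSpace ℝ (Fin n)` by rescaling momentum. -/
def fourierHbarCLM (hbar : ℝ) (hh : hbar ≠ 0) : 𝓢(Fin n → ℝ, ℂ) →L[ℝ] 𝓢(Fin n → ℝ, ℂ) :=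
  let toEuclidean := (EuclideanSpace.equiv (Fin n) ℝ).symm
  let rescale : (Fin n → ℝ) ≃L[ℝ] (Fin n → ℝ) := ContinuousLinearEquiv.smulLeft
    (Units.mk0 (2 * π * hbar)⁻¹ (inv_ne_zero (mul_ne_zero Real.two_pi_pos.ne' hh)))
  (Real.sqrt ((2 * π * hbar) ^ n))⁻¹ •
    (compCLMOfContinuousLinearEquiv ℝ (rescale.trans toEuclidean) ∘L
      fourierCLM ℝ 𝓢(EuclideanSpace ℝ (Fin n), ℂ) ∘L
      compCLMOfContinuousLinearEquiv ℝ toEuclidean.symm)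

lemma fourierHbarCLM_apply {hbar : ℝ} (hh : hbar ≠ 0) (f : 𝓢(Fin n → ℝ, ℂ)) (p : Fin n → ℝ) :
    fourierHbarCLM hbar hh f p = FourierHbar hbar f p := by
  rw [fourierHbar_eq_fourier, ← Complex.ofReal_inv, ← Complex.real_smul]
  rfl

lemma fourierHbar_inversion {hbar : ℝ} (hh : 0 < hbar) (f : 𝓢(Fin n → ℝ, ℂ)) (y : Fin n → ℝ) :
    ((Real.sqrt ((2 * π * hbar) ^ n))⁻¹ : ℂ) *
        ∫ p, Complex.exp ((Complex.I / (hbar : ℂ)) * (dotR p y : ℝ)) * FourierHbar hbar f p =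
      f y := by
  have hscale : 0 < (2 * π * hbar) ^ n := by positivity
  have hsqrt : (Real.sqrt ((2 * π * hbar) ^ n) : ℂ) ^ 2 = ((2 * π * hbar) ^ n : ℝ) := by
    exact_mod_cast Real.sq_sqrt hscale.le
  let fE : 𝓢(EuclideanSpace ℝ (Fin n), ℂ) :=
    compCLMOfContinuousLinearEquiv ℝ (EuclideanSpace.equiv (Fin n) ℝ) f
  let G (w : EuclideanSpace ℝ (Fin n)) : ℂ :=
    Complex.exp (↑(2 * π * inner ℝ w (WithLp.toLp 2 y)) * Complex.I) * 𝓕 (⇑fE) w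
  have hinv : ∫ w, G w = f y := by
    have h := congrFun (fE.continuous.fourierInv_fourier_eq fE.integrable (𝓕 fE).integrable)
      (WithLp.toLp 2 y)
    rw [Real.fourierInv_eq'] at h
    exact h
  have hintegrand (w : EuclideanSpace ℝ (Fin n)) :
      Complex.exp ((Complex.I / (hbar : ℂ)) * (dotR w.ofLp y : ℝ)) * FourierHbar hbar f w.ofLp =
        ((Real.sqrt ((2 * π * hbar) ^ n))⁻¹ : ℂ) * G ((2 * π * hbar)⁻¹ • w) := by
    have hphase : (Complex.I / (hbar : ℂ)) * (dotR w.ofLp y : ℝ) =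
        ↑(2 * π * inner ℝ ((2 * π * hbar)⁻¹ • w) (WithLp.toLp 2 y)) * Complex.I := by
      rw [real_inner_smul_left, inner_eq_dotR, dotR_comm y, mul_inv]
      push_cast
      field_simp
    rw [fourierHbar_eq_fourier, hphase, mul_left_comm]
    rfl
  simp_rw [← integral_euclideanSpace_ofLp, hintegrand]
  rw [integral_const_mul, Measure.integral_comp_inv_smul, hinv, finrank_euclideanSpace_fin,
    abs_of_pos hscale, Complex.real_smul, ← hsqrt]
  have : (Real.sqrt ((2 * π * hbar) ^ n) : ℂ) ≠ 0 := by
    exact_mod_cast (Real.sqrt_pos.mpr hscale).ne'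
  field_simp

lemma wigTau_eq_fourierHbar {hbar : ℝ} (hh : 0 < hbar) (ψ φ : 𝓢(Fin n → ℝ, ℂ)) (τ : ℝ)
    (x p : Fin n → ℝ) :
    WigTau hbar τ ψ φ x p = ((Real.sqrt ((2 * π * hbar) ^ n))⁻¹ : ℂ) *
      FourierHbar hbar (wignerSlice ψ φ τ x) p := by
  have hscale : 0 ≤ (2 * π * hbar) ^ n := by positivity
  have hsqrt : (Real.sqrt ((2 * π * hbar) ^ n) : ℂ)⁻¹ * (Real.sqrt ((2 * π * hbar) ^ n) : ℂ)⁻¹ =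
      (((2 * π * hbar) ^ n : ℝ) : ℂ)⁻¹ := by
    rw [← mul_inv, ← Complex.ofReal_mul, Real.mul_self_sqrt hscale]
  simp only [WigTau, FourierHbar, wignerSlice_apply, ← mul_assoc, hsqrt]

lemma integral_exp_mul_wigTau {hbar : ℝ} (hh : 0 < hbar) (ψ φ : 𝓢(Fin n → ℝ, ℂ)) (τ : ℝ)
    (x y : Fin n → ℝ) :
    ∫ p, Complex.exp ((Complex.I / (hbar : ℂ)) * (dotR p y : ℝ)) * WigTau hbar τ ψ φ x p =
      ψ (x + τ • y) * (starRingEnd ℂ) (φ (x - (1 - τ) • y)) := by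
  simp_rw [wigTau_eq_fourierHbar hh, mul_left_comm _ ((√((2 * π * hbar) ^ n) : ℂ)⁻¹)]
  rw [integral_const_mul]
  exact fourierHbar_inversion hh (wignerSlice ψ φ τ x) y

lemma stronglyMeasurable_wigTau (hbar : ℝ) {ψ φ : (Fin n → ℝ) → ℂ} (hψ : Continuous ψ)
    (hφ : Continuous φ) :
    StronglyMeasurable fun q : ℝ × ((Fin n → ℝ) × (Fin n → ℝ)) =>
      WigTau hbar q.1 ψ φ q.2.1 q.2.2 := by
  refine StronglyMeasurable.const_mul (StronglyMeasurable.integral_prod_right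
    (f := fun (q : ℝ × ((Fin n → ℝ) × (Fin n → ℝ))) y =>
      Complex.exp (-(Complex.I / (hbar : ℂ)) * (dotR q.2.2 y : ℝ)) * ψ (q.2.1 + q.1 • y) *
        (starRingEnd ℂ) (φ (q.2.1 - (1 - q.1) • y))) (Continuous.stronglyMeasurable ?_)) _
  exact .mul (by fun_prop) (Complex.continuous_conj.comp (by fun_prop))

lemma exists_integrable_norm_wigTau_le {hbar : ℝ} (hh : 0 < hbar) (ψ φ : 𝓢(Fin n → ℝ, ℂ))
    (R : ℝ) :
    ∃ G : (Fin n → ℝ) × (Fin n → ℝ) → ℝ, Integrable G ∧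
      ∀ τ : ℝ, |τ| ≤ R → ∀ z, ‖WigTau hbar τ ψ φ z.1 z.2‖ ≤ G z := by
  set k := (volume : Measure (Fin n → ℝ)).integrablePower
  have hdecay :=
    Measure.integrable_pow_neg_integrablePower (volume : Measure (Fin n → ℝ))
  obtain ⟨C, hC⟩ := exists_one_add_norm_pow_mul_norm_le_of_isVonNBounded
    ((isVonNBounded_one_add_norm_pow_smul_wignerSlice ψ φ k R).image
      (fourierHbarCLM hbar hh.ne')) k
  refine ⟨_, (hdecay.mul_prod hdecay).const_mul ((Real.sqrt ((2 * π * hbar) ^ n))⁻¹ * C), ?_⟩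
  rintro τ hτ ⟨x, p⟩
  have hfourier : ‖FourierHbar hbar (wignerSlice ψ φ τ x) p‖ ≤
      C * ((1 + ‖x‖) ^ (-(k : ℝ)) * (1 + ‖p‖) ^ (-(k : ℝ))) := by
    have h := hC _ ⟨_, ⟨(τ, x), hτ, rfl⟩, rfl⟩ p
    rw [map_smul, smul_apply, fourierHbarCLM_apply, norm_smul,
      Real.norm_of_nonneg (by positivity), mul_left_comm, ← mul_assoc] at h
    rw [Real.rpow_neg (by positivity), Real.rpow_neg (by positivity), Real.rpow_natCast,
      Real.rpow_natCast, ← mul_inv, ← div_eq_mul_inv]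
    exact (le_div_iff₀' (by positivity)).mpr h
  calc ‖WigTau hbar τ ψ φ x p‖
      = (Real.sqrt ((2 * π * hbar) ^ n))⁻¹ * ‖FourierHbar hbar (wignerSlice ψ φ τ x) p‖ := by
        rw [wigTau_eq_fourierHbar hh, norm_mul, norm_inv, Complex.norm_real,
          Real.norm_of_nonneg (Real.sqrt_nonneg _)]
    _ ≤ (Real.sqrt ((2 * π * hbar) ^ n))⁻¹ *
          (C * ((1 + ‖x‖) ^ (-(k : ℝ)) * (1 + ‖p‖) ^ (-(k : ℝ)))) := by gcongr
    _ = _ := (mul_assoc ..).symm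

lemma integrable_wigTau {hbar : ℝ} (hh : 0 < hbar) (ψ φ : 𝓢(Fin n → ℝ, ℂ)) (τ : ℝ) :
    Integrable fun z : (Fin n → ℝ) × (Fin n → ℝ) => WigTau hbar τ ψ φ z.1 z.2 := by
  obtain ⟨G, hG, hle⟩ := exists_integrable_norm_wigTau_le hh ψ φ |τ|
  have hmeas := (stronglyMeasurable_wigTau hbar ψ.continuous φ.continuous).comp_measurable
    (measurable_prodMk_left (x := τ))
  exact hG.mono' hmeas.aestronglyMeasurable (ae_of_all _ (hle τ le_rfl))

lemma integrable_uncurry_wigTau {hbar : ℝ} (hh : 0 < hbar) (ψ φ : 𝓢(Fin n → ℝ, ℂ)) (a b : ℝ) :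
    Integrable
      (Function.uncurry fun (τ : ℝ) (z : (Fin n → ℝ) × (Fin n → ℝ)) =>
        WigTau hbar τ ψ φ z.1 z.2)
      ((volume.restrict (Set.uIoc a b)).prod volume) := by
  obtain ⟨G, hG, hle⟩ := exists_integrable_norm_wigTau_le hh ψ φ (max |a| |b|)
  have : IsFiniteMeasure (volume.restrict (Set.uIoc a b)) := by
    rw [Set.uIoc]; infer_instance
  refine (hG.comp_snd _).mono'
    (stronglyMeasurable_wigTau hbar ψ.continuous φ.continuous).aestronglyMeasurable ?_
  have hτ : ∀ᵐ τ ∂volume.restrict (Set.uIoc a b), |τ| ≤ max |a| |b| := by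
    filter_upwards [ae_restrict_mem measurableSet_uIoc] with τ hτ
    have := Set.uIoc_subset_uIcc hτ
    rw [Set.mem_uIcc] at this
    grind
  filter_upwards [Measure.quasiMeasurePreserving_fst.ae hτ] with q hq using hle q.1 hq q.2

lemma symplFT_intervalIntegral (hbar : ℝ) {a b : ℝ}
    {F : ℝ → (Fin n → ℝ) × (Fin n → ℝ) → ℂ}
    (hF : Integrable (Function.uncurry F) ((volume.restrict (Set.uIoc a b)).prod volume))
    (z : (Fin n → ℝ) × (Fin n → ℝ)) :
    symplFT hbar (fun z' => ∫ τ in a..b, F τ z') z = ∫ τ in a..b, symplFT hbar (F τ) z := by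
  have hphase : Continuous fun q : ℝ × (Fin n → ℝ) × (Fin n → ℝ) =>
      Complex.exp (-(Complex.I / (hbar : ℂ)) *
        ((dotR z.2 q.2.1 - dotR q.2.2 z.1 : ℝ) : ℂ)) := by fun_prop
  have hint := hF.bdd_mul hphase.aestronglyMeasurable
    (ae_of_all _ fun q => (norm_exp_neg_I_div_mul hbar _).le)
  simp_rw [symplFT, ← intervalIntegral.integral_const_mul]
  rw [← intervalIntegral_integral_swap hint, ← intervalIntegral.integral_const_mul]

lemma exp_mul_amb (hbar : ℝ) (ψ φ : (Fin n → ℝ) → ℂ) (τ : ℝ) (x p : Fin n → ℝ) :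
    Complex.exp ((Complex.I / (hbar : ℂ)) * (((τ - 1 / 2) * dotR p x : ℝ) : ℂ)) *
        Amb hbar ψ φ x p =
      (((2 * π * hbar) ^ n : ℝ) : ℂ)⁻¹ *
        ∫ x', Complex.exp (-(Complex.I / (hbar : ℂ)) * (dotR p x' : ℝ)) *
          (ψ (x' + τ • x) * (starRingEnd ℂ) (φ (x' - (1 - τ) • x))) := by
  rw [Amb, mul_left_comm, ← integral_add_right_eq_self _ ((τ - 1 / 2) • x),
    ← integral_const_mul (Complex.exp _)]
  congr 2 with y
  rw [show y + (τ - 1 / 2) • x + (1 / 2 : ℝ) • x = y + τ • x by module,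
    show y + (τ - 1 / 2) • x - (1 / 2 : ℝ) • x = y - (1 - τ) • x by module,
    dotR_add, dotR_smul]
  simp only [← mul_assoc, ← Complex.exp_add]
  congr 3
  push_cast
  ring

lemma symplFT_wigTau {hbar : ℝ} (hh : 0 < hbar) (ψ φ : 𝓢(Fin n → ℝ, ℂ)) (τ : ℝ)
    (x p : Fin n → ℝ) :
    symplFT hbar (fun z => WigTau hbar τ ψ φ z.1 z.2) (x, p) =
      Complex.exp ((Complex.I / (hbar : ℂ)) * (((τ - 1 / 2) * dotR p x : ℝ) : ℂ)) *
        Amb hbar ψ φ x p := by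
  have hphase : Continuous fun z : (Fin n → ℝ) × (Fin n → ℝ) =>
      Complex.exp (-(Complex.I / (hbar : ℂ)) * ((dotR p z.1 - dotR z.2 x : ℝ) : ℂ)) := by fun_prop
  have hint := (integrable_wigTau hh ψ φ τ).bdd_mul hphase.aestronglyMeasurable
    (ae_of_all _ fun z => (norm_exp_neg_I_div_mul hbar _).le)
  have hmomentum (x' : Fin n → ℝ) :
      ∫ p', Complex.exp (-(Complex.I / (hbar : ℂ)) * ((dotR p x' - dotR p' x : ℝ) : ℂ)) *
          WigTau hbar τ ψ φ x' p' =
        Complex.exp (-(Complex.I / (hbar : ℂ)) * (dotR p x' : ℝ)) *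
          (ψ (x' + τ • x) * (starRingEnd ℂ) (φ (x' - (1 - τ) • x))) := by
    rw [← integral_exp_mul_wigTau hh, ← integral_const_mul]
    congr! 2
    rw [← mul_assoc, ← Complex.exp_add]
    congr 2
    push_cast
    ring
  rw [Measure.volume_eq_prod] at hint
  rw [exp_mul_amb, symplFT, Measure.volume_eq_prod, integral_prod _ hint]
  simp only [hmomentum]

lemma theta_eq_sinc {hbar : ℝ} (hh : hbar ≠ 0) (x p : Fin n → ℝ) :
    Theta hbar x p = Real.sinc (dotR p x / (2 * hbar)) := by
  simp only [Theta, Real.sinc, dotR_comm p x, div_eq_zero_iff, mul_eq_zero, two_ne_zero, hh,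
    or_false]

lemma integral_exp_two_mul_sub_mul_I_eq_sinc (r : ℝ) :
    ∫ τ in (0 : ℝ)..1, Complex.exp ((2 * r * τ - r : ℝ) * Complex.I) = Real.sinc r := by
  rcases eq_or_ne r 0 with rfl | hr
  · simp
  · have hr' : (r : ℂ) ≠ 0 := by exact_mod_cast hr
    rw [intervalIntegral.integral_comp_mul_sub (fun t : ℝ => Complex.exp (t * Complex.I))
      (mul_ne_zero two_ne_zero hr), show 2 * r * 0 - r = -r by ring,
      show 2 * r * 1 - r = r by ring, integral_exp_mul_I_eq_sinc, Complex.real_smul]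
    push_cast
    field_simp

lemma integral_exp_eq_theta {hbar : ℝ} (hh : hbar ≠ 0) (x p : Fin n → ℝ) :
    ∫ τ in (0 : ℝ)..1,
        Complex.exp ((Complex.I / (hbar : ℂ)) * (((τ - 1 / 2) * dotR p x : ℝ) : ℂ)) =
      ((Theta hbar x p : ℝ) : ℂ) := by
  rw [theta_eq_sinc hh, ← integral_exp_two_mul_sub_mul_I_eq_sinc]
  congr! 3 with τ
  push_cast
  field_simp

end PhaseSpace

/-- The symplectic Fourier transform of the Born–Jordan–Wigner distribution is
`Θ` times the cross-ambiguity function: `F_σ(Wig_BJ(ψ,φ))(z) = Θ(z)·Amb(ψ,φ)(z)`. -/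
theorem symplFT_wigBJ (hbar : ℝ) (hh : 0 < hbar) (n : ℕ) (hn : 1 ≤ n)
    (ψ φ : SchwartzMap (Fin n → ℝ) ℂ) (x p : Fin n → ℝ) :
    symplFT hbar (fun z => WigBJ hbar (⇑ψ) (⇑φ) z.1 z.2) (x, p) =
      ((Theta hbar x p : ℝ) : ℂ) * Amb hbar (⇑ψ) (⇑φ) x p := by
  calc symplFT hbar (fun z => WigBJ hbar (⇑ψ) (⇑φ) z.1 z.2) (x, p)
      = ∫ τ in (0:ℝ)..1, symplFT hbar (fun z => WigTau hbar τ (⇑ψ) (⇑φ) z.1 z.2) (x, p) :=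
        symplFT_intervalIntegral hbar (integrable_uncurry_wigTau hh ψ φ 0 1) (x, p)
    _ = (∫ τ in (0:ℝ)..1,
          Complex.exp ((Complex.I / (hbar : ℂ)) * (((τ - 1 / 2) * dotR p x : ℝ) : ℂ))) *
          Amb hbar (⇑ψ) (⇑φ) x p := by
        simp_rw [symplFT_wigTau hh, intervalIntegral.integral_mul_const]
    _ = ((Theta hbar x p : ℝ) : ℂ) * Amb hbar (⇑ψ) (⇑φ) x p := by
        rw [integral_exp_eq_theta hh.ne']

end
end

section
/- Let L be an invertible real n×n matrix, and define the metaplectic dilation M̂_L ψ(x) = √|det L| · ψ(Lx) for Schwartz ψ. Then for every Schwartz symbol a : ℝ²ⁿ → ℂ, every Schwartz function ψ and every x ∈ ℝⁿ, M̂_L((A_BJψ))(x) = (B_BJ(M̂_Lψ))(x), where B_BJ is the Born–Jordan operator with symbol b(x,p) = a(Lx, (L⁻¹)ᵀ p) = (a ∘ s⁻¹)(x,p) for the symplectic map s(x,p) = (L⁻¹x, Lᵀp). That is, Born–Jordan quantization is covariant under the symplectic dilations: M̂_L Op_BJ(a) M̂_L⁻¹ = Op_BJ(a ∘ s⁻¹).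 -/
open MeasureTheory Real Complex

noncomputable section

/-- The metaplectic dilation `M̂_L ψ(x) = √|det L| ψ(Lx)`. -/
def MetaDil {n : ℕ} (L : Matrix (Fin n) (Fin n) ℝ) (f : (Fin n → ℝ) → ℂ)
    (x : Fin n → ℝ) : ℂ :=
  ((Real.sqrt |L.det| : ℝ) : ℂ) * f (L.mulVec x)

/-!
In the Schwartz kernel `K_a(x, y)` of the Shubin `τ`-operator with symbol `a`, the substitution
`p ↦ Lᵀp` moves `L` from the momentum to the positions in the phase `p · (x - y)`, and the point
`τx + (1 - τ)y` depends linearly on `(x, y)`. Hence the symbol `a ∘ s⁻¹` has kernel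
`|det L| K_a(Lx, Ly)`, and the factor `|det L|` is absorbed by the substitution `y ↦ Ly` in the
outer integral. So every `τ`-quantization is covariant, and averaging over `τ` preserves this.
-/

section ChangeOfVariables

variable {F : Type*} [NormedAddCommGroup F] [NormedSpace ℝ F]

theorem integral_eq_abs_det_smul_integral_comp_linearMap {E : Type*} [NormedAddCommGroup E]
    [NormedSpace ℝ E] [FiniteDimensional ℝ E] [MeasurableSpace E] [BorelSpace E] (μ : Measure E)
    [μ.IsAddHaarMeasure] {T : E →ₗ[ℝ] E} (hT : LinearMap.det T ≠ 0) (f : E → F) :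
    ∫ x, f x ∂μ = |LinearMap.det T| • ∫ x, f (T x) ∂μ := by
  let e : E ≃L[ℝ] E := (T.equivOfDetNeZero hT).toContinuousLinearEquiv
  have hmap : ∫ x, f (T x) ∂μ = ∫ x, f x ∂(μ.map T) :=
    (e.toHomeomorph.measurableEmbedding.integral_map f).symm
  rw [hmap, Measure.map_linearMap_addHaar_eq_smul_addHaar μ hT, integral_smul_measure,
    ENNReal.toReal_ofReal (abs_nonneg _), abs_inv, smul_inv_smul₀ (abs_ne_zero.mpr hT)]

theorem integral_eq_abs_det_smul_integral_comp_mulVec {ι : Type*} [Fintype ι] [DecidableEq ι]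
    {M : Matrix ι ι ℝ} (hM : M.det ≠ 0) (f : (ι → ℝ) → F) :
    ∫ x, f x = |M.det| • ∫ x, f (M.mulVec x) := by
  rw [← LinearMap.det_toLin'] at hM ⊢
  exact integral_eq_abs_det_smul_integral_comp_linearMap volume hM f

end ChangeOfVariables

theorem dotR_transpose_mulVec {n : ℕ} (M : Matrix (Fin n) (Fin n) ℝ) (p u : Fin n → ℝ) :
    dotR (M.transpose.mulVec p) u = dotR p (M.mulVec u) := by
  change M.transpose.mulVec p ⬝ᵥ u = p ⬝ᵥ M.mulVec u
  rw [Matrix.mulVec_transpose, Matrix.dotProduct_mulVec]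

/-- The Schwartz kernel of the Shubin `τ`-operator with symbol `a`:
`K(x,y) = (2πhbar)^(−n) ∫ e^((i/hbar) p·(x−y)) a(τx+(1−τ)y, p) dp`. -/
def shubinKernel (hbar : ℝ) {n : ℕ} (τ : ℝ) (a : ((Fin n → ℝ) × (Fin n → ℝ)) → ℂ)
    (x y : Fin n → ℝ) : ℂ :=
  ((((2 * π * hbar) ^ n : ℝ))⁻¹ : ℂ) *
    ∫ p : Fin n → ℝ,
      Complex.exp ((Complex.I / (hbar : ℂ)) * (dotR p (x - y) : ℝ)) *
        a (τ • x + (1 - τ) • y, p)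

/-- The symbol `a ∘ s⁻¹` for the symplectic dilation `s(x,p) = (L⁻¹x, Lᵀp)`, by which
`MetaDil L` acts on symbols. -/
def dilateSymbol {n : ℕ} (L : Matrix (Fin n) (Fin n) ℝ) (a : ((Fin n → ℝ) × (Fin n → ℝ)) → ℂ)
    (z : (Fin n → ℝ) × (Fin n → ℝ)) : ℂ :=
  a (L.mulVec z.1, (L⁻¹).transpose.mulVec z.2)

section DilationCovariance

variable (hbar τ : ℝ) {n : ℕ} {L : Matrix (Fin n) (Fin n) ℝ}
  (a : ((Fin n → ℝ) × (Fin n → ℝ)) → ℂ) (ψ : (Fin n → ℝ) → ℂ) (x y : Fin n → ℝ)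

theorem shubinOp_eq_integral_shubinKernel :
    ShubinOp hbar τ a ψ x = ∫ y, shubinKernel hbar τ a x y * ψ y := by
  simp only [ShubinOp, shubinKernel, mul_assoc, integral_const_mul]

theorem dilateSymbol_transpose_mulVec (hL : IsUnit L.det) (p : Fin n → ℝ) :
    dilateSymbol L a (x, L.transpose.mulVec p) = a (L.mulVec x, p) := by
  rw [dilateSymbol, Matrix.mulVec_mulVec, ← Matrix.transpose_mul, Matrix.mul_nonsing_inv _ hL,
    Matrix.transpose_one, Matrix.one_mulVec]

theorem shubinKernel_dilateSymbol (hL : IsUnit L.det) :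
    shubinKernel hbar τ (dilateSymbol L a) x y =
      |L.det| • shubinKernel hbar τ a (L.mulVec x) (L.mulVec y) := by
  have hLt : L.transpose.det ≠ 0 := L.det_transpose.trans_ne hL.ne_zero
  rw [shubinKernel, integral_eq_abs_det_smul_integral_comp_mulVec hLt, L.det_transpose,
    mul_smul_comm, shubinKernel]
  simp only [dotR_transpose_mulVec, dilateSymbol_transpose_mulVec _ _ hL, Matrix.mulVec_add,
    Matrix.mulVec_sub, Matrix.mulVec_smul]

theorem metaDil_shubinOp (hL : IsUnit L.det) :
    MetaDil L (ShubinOp hbar τ a ψ) x =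
      ShubinOp hbar τ (dilateSymbol L a) (MetaDil L ψ) x := by
  let K := shubinKernel hbar τ a
  let c : ℂ := (√|L.det| : ℝ)
  calc MetaDil L (ShubinOp hbar τ a ψ) x
      = c * ∫ y, K (L.mulVec x) y * ψ y := by
        rw [MetaDil, shubinOp_eq_integral_shubinKernel]
    _ = c * (|L.det| • ∫ y, K (L.mulVec x) (L.mulVec y) * ψ (L.mulVec y)) := by
        rw [integral_eq_abs_det_smul_integral_comp_mulVec hL.ne_zero]
    _ = ∫ y, (|L.det| • K (L.mulVec x) (L.mulVec y)) * (c * ψ (L.mulVec y)) := by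
        rw [← integral_smul, ← integral_const_mul]
        simp only [smul_mul_assoc, mul_smul_comm, mul_left_comm c]
    _ = ∫ y, shubinKernel hbar τ (dilateSymbol L a) x y * MetaDil L ψ y := by
        simp only [shubinKernel_dilateSymbol _ _ _ _ _ hL, MetaDil, K, c]
    _ = ShubinOp hbar τ (dilateSymbol L a) (MetaDil L ψ) x :=
        (shubinOp_eq_integral_shubinKernel ..).symm

theorem bjOp_metaplectic_dilation_covariance_general (_hh : hbar ≠ 0) (hL : IsUnit L.det) :
    MetaDil L (BJOp hbar a ψ) x = BJOp hbar (dilateSymbol L a) (MetaDil L ψ) x := by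
  calc MetaDil L (BJOp hbar a ψ) x
      = ∫ τ in (0:ℝ)..1, MetaDil L (ShubinOp hbar τ a ψ) x :=
        (intervalIntegral.integral_const_mul _ _).symm
    _ = BJOp hbar (dilateSymbol L a) (MetaDil L ψ) x := by
        simp only [metaDil_shubinOp _ _ _ _ _ hL, BJOp]

end DilationCovariance

/-- Symplectic covariance of Born–Jordan quantization under dilations:
`M̂_L Op_BJ(a) M̂_L⁻¹ = Op_BJ(a ∘ s⁻¹)` with `s(x,p) = (L⁻¹x, Lᵀp)`, i.e.
`M̂_L(A_BJ ψ) = B_BJ(M̂_L ψ)` where `B_BJ` has symbol `b(x,p) = a(Lx, (L⁻¹)ᵀp)`. -/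
theorem bjOp_metaplectic_dilation_covariance (hbar : ℝ) (hh : 0 < hbar)
    (n : ℕ) (hn : 1 ≤ n) (L : Matrix (Fin n) (Fin n) ℝ) (hL : IsUnit L.det)
    (a : SchwartzMap ((Fin n → ℝ) × (Fin n → ℝ)) ℂ)
    (ψ : SchwartzMap (Fin n → ℝ) ℂ) (x : Fin n → ℝ) :
    MetaDil L (BJOp hbar (⇑a) (⇑ψ)) x =
      BJOp hbar (fun z => a (L.mulVec z.1, (L⁻¹).transpose.mulVec z.2))
        (MetaDil L (⇑ψ)) x :=
  bjOp_metaplectic_dilation_covariance_general hbar a ψ x hh.ne' hL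

end
end
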